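/- Let L be a finite-dimensional solvable Leibniz algebra over a field F with φ(L) = 0 which is minimally non-supersolvable (L is not supersolvable but every proper subalgebra of L is supersolvable). Then either (1) L is strongly solvable and L = A ∔ ⟨x⟩ where A is the unique minimal ideal of L and dim A > 1; or (2) L is not strongly solvable, F has characteristic p > 0, L has a unique minimal ideal A with basis {e₁, …, e_p}, and either (a) L = A + ⟨x,y⟩ with xe_i = e_{i+1}, ye_i = (α + i)e_i (indices mod p), yx = x, and every a ∈ F equals t^p − t for some t ∈ F, or (b) L = A + ⟨x,y,z⟩ with xe_i = e_{i+1}, ye_i = (i+1)e_{i−1}, ze_i = e_i (indices mod p), yx = z, xz = yz = 0, and F is perfect when p = 2. Moreover, either L is a Lie algebra, or else in the above structure A = Leib(L) and A·L = 0. -/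

import Mathlib

/-!
Basic theory of (left) Leibniz algebras, formalized over an arbitrary field `F`.
A Leibniz algebra structure on an `F`-vector space `L` is given by a bilinear
multiplication `m : L →ₗ[F] L →ₗ[F] L` satisfying the left Leibniz identity.
-/

open Submodule Module

section LeibnizDefs

variable {F : Type*} [Field F] {L : Type*} [AddCommGroup L] [Module F L]
variable (m : L →ₗ[F] L →ₗ[F] L)

/-- The left Leibniz identity: `a(bc) = (ab)c + b(ac)`. -/
def IsLeibniz : Prop :=
  ∀ a b c : L, m a (m b c) = m (m a b) c + m b (m a c)

/-- The multiplication is antisymmetric, i.e. the algebra is a Lie algebra. -/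
def IsLie : Prop := ∀ a b : L, m a b = - m b a

/-- The product of two subspaces: the span of all products `x·y`, `x ∈ P`, `y ∈ Q`. -/
abbrev mprod (P Q : Submodule F L) : Submodule F L := Submodule.map₂ m P Q

/-- A subalgebra: a subspace closed under multiplication. -/
def IsSubalg (S : Submodule F L) : Prop := ∀ x ∈ S, ∀ y ∈ S, m x y ∈ S

/-- An ideal of `L`: a subspace `I` with `L·I ⊆ I` and `I·L ⊆ I`. -/
def IsIdeal (I : Submodule F L) : Prop :=
  ∀ (x : L), ∀ y ∈ I, m x y ∈ I ∧ m y x ∈ I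

/-- An ideal `I` of a subalgebra `S`. -/
def IsIdealOf (S I : Submodule F L) : Prop :=
  I ≤ S ∧ ∀ x ∈ S, ∀ y ∈ I, m x y ∈ I ∧ m y x ∈ I

/-- A minimal ideal: a nonzero ideal containing no nonzero proper subideal of `L`. -/
def IsMinIdeal (A : Submodule F L) : Prop :=
  IsIdeal m A ∧ A ≠ ⊥ ∧ ∀ J, IsIdeal m J → J ≤ A → J = ⊥ ∨ J = A

/-- The derived series of a subspace: `S^(0) = S`, `S^(n+1) = S^(n)·S^(n)`. -/
def derSeries (S : Submodule F L) : ℕ → Submodule F L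
  | 0 => S
  | n + 1 => mprod m (derSeries S n) (derSeries S n)

/-- A subalgebra is solvable if its derived series reaches `0`. -/
def IsSolvableSub (S : Submodule F L) : Prop := ∃ n, derSeries m S n = ⊥

/-- The Leibniz algebra `L` is solvable. -/
abbrev IsSolvableAlg : Prop := IsSolvableSub m (⊤ : Submodule F L)

/-- The lower central series of a subspace: `N^1 = N`, `N^(k+1) = N·N^k`. -/
def lcSeries (N : Submodule F L) : ℕ → Submodule F L
  | 0 => N
  | k + 1 => mprod m N (lcSeries N k)

/-- A subalgebra is nilpotent if its lower central series reaches `0`. -/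
def IsNilpotentSub (N : Submodule F L) : Prop := ∃ k, lcSeries m N k = ⊥

/-- A subalgebra `S` is strongly solvable if `S² = S·S` is nilpotent. -/
def IsStronglySolvable (S : Submodule F L) : Prop :=
  IsNilpotentSub m (mprod m S S)

/-- A maximal subalgebra: a proper subalgebra not contained in any larger proper
subalgebra. -/
def IsMaxSubalg (S : Submodule F L) : Prop :=
  IsSubalg m S ∧ S ≠ ⊤ ∧ ∀ T, IsSubalg m T → S ≤ T → T = S ∨ T = ⊤

/-- The Frattini subalgebra `F(L)`: the intersection of all maximal subalgebras. -/
def frattiniSub : Submodule F L := sInf {S | IsMaxSubalg m S}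

/-- The Frattini ideal `φ(L)`: the largest ideal contained in the Frattini
subalgebra. -/
def frattiniIdeal : Submodule F L :=
  sSup {I | IsIdeal m I ∧ I ≤ frattiniSub m}

/-- `Leib(L)`: the span of all squares `x·x`. -/
def leibIdeal : Submodule F L := Submodule.span F {z | ∃ x : L, z = m x x}

/-- The subalgebra generated by a set. -/
def genBy (s : Set L) : Submodule F L := sInf {S | IsSubalg m S ∧ s ⊆ S}

/-- A subalgebra is two-generated if it is generated as an algebra by two elements. -/
def TwoGenerated (S : Submodule F L) : Prop := ∃ x y : L, genBy m {x, y} = S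

/-- A subalgebra `S` is supersolvable if there is a chain of ideals of `S`,
`0 = S₀ ⊂ S₁ ⊂ ⋯ ⊂ Sₙ = S`, with `dim Sᵢ = i`. -/
def IsSupersolvable (S : Submodule F L) : Prop :=
  ∃ (n : ℕ) (c : ℕ → Submodule F L), c 0 = ⊥ ∧ c n = S ∧
    (∀ i, i < n → c i ≤ c (i + 1)) ∧
    (∀ i, i ≤ n → IsIdealOf m S (c i)) ∧
    (∀ i, i ≤ n → Module.finrank F (c i) = i)

/-- A subspace `S` is nil on `L` if left multiplication by each of its elements is a
nilpotent operator. -/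
def IsNilOn (S : Submodule F L) : Prop :=
  ∀ x ∈ S, IsNilpotent (m x : Module.End F L)

open scoped TensorProduct in
/-- A subspace `S` is triangulable on `L` if, after extending scalars to the algebraic
closure `K` of `F`, the space `K ⊗ L` admits a basis with respect to which the left
multiplication operators by all elements of `K ⊗ S` are upper triangular matrices.
(Since upper triangular matrices form a `K`-subspace of matrices, it suffices that the
base-changed left multiplication by each `x ∈ S` is upper triangular.) -/
def IsTriangulableOn (S : Submodule F L) : Prop :=
  ∃ (n : ℕ) (b : Basis (Fin n) (AlgebraicClosure F) ((AlgebraicClosure F) ⊗[F] L)),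
    ∀ x ∈ S, ∀ i j : Fin n, j < i →
      LinearMap.toMatrix b b (LinearMap.baseChange (AlgebraicClosure F) (m x)) i j = 0

end LeibnizDefs

/-!
Since `φ(L) = 0`, a minimal ideal `A` has a complement `B` which is a subalgebra, and `B` is
supersolvable because it is proper. If `dim A` were `1`, a chain of ideals of `B` would lift to one
of `L`; so `dim A > 1`, and this forces `A` to be the only minimal ideal, on which `B` acts
faithfully and irreducibly. For a proper subalgebra `S` of `B`, supersolvability of `A + S` makes
every commutator of `S` act on `A` without nonzero eigenvalues. Combined with Schur's lemma, this
leaves three possibilities for `B`: a line, the nonabelian algebra `[y, x] = x`, or the Heisenberg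
algebra with `[y, x]` acting as the identity.

In the last case the actions satisfy the Weyl relation `[Y, X] = 1`; taking traces shows that the
characteristic is `p > 0`, and the powers of `X` applied to a vector killed by `Y` form the required
basis. In the second case `X` is invertible and `(Y - α) X⁻¹` is a Weyl partner of `X`. The
conditions on the field express the existence of eigenvalues of `y + a x` and `x + (a - 1) y`.
-/

section IrreducibleAction

variable {F V : Type*} [Field F] [AddCommGroup V] [Module F V]

theorem hasEigenvalue_of_apply_eq_smul {T : Module.End F V} {v : V} {μ : F} (hv : v ≠ 0)
    (h : T v = μ • v) : T.HasEigenvalue μ :=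
  Module.End.hasEigenvalue_of_hasEigenvector
    (Module.End.hasEigenvector_iff.2 ⟨Module.End.mem_eigenspace_iff.2 h, hv⟩)

/-- A set of endomorphisms acts irreducibly if `⊥` and `⊤` are its only common invariant
subspaces. The zero space is not excluded. -/
def ActsIrreducibly (s : Set (Module.End F V)) : Prop :=
  ∀ W : Submodule F V, (∀ T ∈ s, W ∈ T.invtSubmodule) → W = ⊥ ∨ W = ⊤

namespace ActsIrreducibly

variable {s t : Set (Module.End F V)}

theorem of_subset_adjoin (hs : ActsIrreducibly s) (hst : s ⊆ Algebra.adjoin F t) :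
    ActsIrreducibly t := by
  refine fun W hW ↦ hs W fun T hT ↦ ?_
  rw [Module.End.mem_invtSubmodule_iff_forall_mem_of_mem]
  have hadj := hst hT
  clear hT
  induction hadj using Algebra.adjoin_induction with
  | mem T hT => exact hW T hT
  | algebraMap c => exact fun v hv ↦ W.smul_mem c hv
  | add _ _ _ _ h₁ h₂ => exact fun v hv ↦ W.add_mem (h₁ v hv) (h₂ v hv)
  | mul _ _ _ _ h₁ h₂ => exact fun v hv ↦ h₁ _ (h₂ v hv)

theorem ker_eq_bot_of_lie_eq_smul (hs : ActsIrreducibly s) {T : Module.End F V} (hT : T ≠ 0)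
    (h : ∀ S ∈ s, ∃ c : F, ⁅S, T⁆ = c • T) : LinearMap.ker T = ⊥ := by
  refine (hs _ fun S hS v hv ↦ ?_).resolve_right fun h ↦ hT (LinearMap.ker_eq_top.1 h)
  obtain ⟨c, hc⟩ := h S hS
  have hTv : T v = 0 := hv
  have hcv : S (T v) - T (S v) = c • T v := LinearMap.congr_fun hc v
  rw [hTv, map_zero, smul_zero, zero_sub, neg_eq_zero] at hcv
  exact hcv

theorem eq_smul_one (hs : ActsIrreducibly s) {T : Module.End F V} {μ : F} (hμ : T.HasEigenvalue μ)
    (h : ∀ S ∈ s, ∃ c : F, ⁅S, T⁆ = c • (T - μ • 1)) : T = μ • 1 := by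
  by_contra hT
  obtain ⟨v, hv⟩ := hμ.exists_hasEigenvector
  have hker := hs.ker_eq_bot_of_lie_eq_smul (sub_ne_zero.2 hT) fun S hS ↦ by
    obtain ⟨c, hc⟩ := h S hS
    refine ⟨c, ?_⟩
    rw [← hc]
    simp [Ring.lie_def, mul_sub, sub_mul]
  exact hv.2 (LinearMap.ker_eq_bot'.1 hker v (by simp [hv.apply_eq_smul]))

theorem finrank_eq_one (hs : ActsIrreducibly s) {v : V} (hv : v ≠ 0)
    (h : ∀ T ∈ s, ∃ c : F, T v = c • v) : finrank F V = 1 := by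
  have htop : F ∙ v = ⊤ := by
    refine (hs (F ∙ v) fun T hT ↦ ?_).resolve_left (by simpa using hv)
    obtain ⟨c, hc⟩ := h T hT
    simpa [Module.End.mem_invtSubmodule, span_singleton_le_iff_mem, hc]
      using (F ∙ v).smul_mem c (mem_span_singleton_self v)
  rw [← finrank_top F V, ← htop, finrank_span_singleton hv]

end ActsIrreducibly

end IrreducibleAction

section WeylPair

theorem lie_pow_succ_of_lie_eq_one {R : Type*} [Ring R] {x y : R} (h : ⁅y, x⁆ = 1) (n : ℕ) :
    ⁅y, x ^ (n + 1)⁆ = (n + 1) • x ^ n := by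
  induction n with
  | zero => simpa using h
  | succ n ih =>
    have hmul : ⁅y, x ^ (n + 1) * x⁆ = ⁅y, x ^ (n + 1)⁆ * x + x ^ (n + 1) * ⁅y, x⁆ := by
      simp only [Ring.lie_def]; noncomm_ring
    rw [pow_succ, hmul, ih, h, smul_mul_assoc, ← pow_succ, mul_one, ← succ_nsmul]

variable {F V : Type*} [Field F] [AddCommGroup V] [Module F V] {X Y : Module.End F V} {p : ℕ}

theorem natCast_finrank_eq_zero_of_lie_eq_one [FiniteDimensional F V] (hYX : ⁅Y, X⁆ = 1) :
    (finrank F V : F) = 0 := by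
  rw [← LinearMap.trace_one, ← hYX, LinearMap.trace_lie]

theorem exists_prime_charP_of_lie_eq_one [FiniteDimensional F V] [Nontrivial V]
    (hYX : ⁅Y, X⁆ = 1) : ∃ p : ℕ, p.Prime ∧ CharP F p := by
  obtain ⟨p, hp⟩ := CharP.exists F
  refine ⟨p, (CharP.char_is_prime_or_zero F p).resolve_right ?_, hp⟩
  rintro rfl
  exact (finrank_pos (R := F) (M := V)).ne'
    ((CharP.cast_eq_zero_iff F 0 _).1 (natCast_finrank_eq_zero_of_lie_eq_one hYX) |> zero_dvd_iff.1)

theorem pow_char_eq_one_of_lie_eq_one [CharP F p] (hYX : ⁅Y, X⁆ = 1)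
    (hirr : ActsIrreducibly {X, Y}) (hX : X.HasEigenvalue 1) : X ^ p = 1 := by
  obtain ⟨v, hv⟩ := hX.exists_hasEigenvector
  have hXp : (X ^ p).HasEigenvalue 1 := by simpa using hX.pow p
  have hcomm : ⁅Y, X ^ p⁆ = 0 := by
    rcases p with _ | k
    · simp [Ring.lie_def]
    · rw [lie_pow_succ_of_lie_eq_one hYX, ← Nat.cast_smul_eq_nsmul F, CharP.cast_eq_zero, zero_smul]
  simpa using hirr.eq_smul_one hXp fun S hS ↦ ⟨0, by
    rcases hS with rfl | rfl
    · simp [Ring.lie_def, ← pow_succ, ← pow_succ']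
    · simpa using hcomm⟩

theorem exists_basis_of_lie_eq_one [FiniteDimensional F V] [Fact p.Prime] [CharP F p]
    (hYX : ⁅Y, X⁆ = 1) (hirr : ActsIrreducibly {X, Y}) (hX : X.HasEigenvalue 1)
    (hY : Y.HasEigenvalue 0) :
    ∃ e : Basis (ZMod p) F V,
      (∀ i, X (e i) = e (i + 1)) ∧ ∀ i, Y (e i) = (i.val : F) • e (i - 1) := by
  obtain ⟨w, hw⟩ := hY.exists_hasEigenvector
  have hYw : Y w = 0 := by simpa using hw.apply_eq_smul
  have hXp := pow_char_eq_one_of_lie_eq_one (p := p) hYX hirr hX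
  let f : ZMod p → V := fun i ↦ (X ^ i.val) w
  have hf (k : ℕ) : f k = (X ^ k) w := by
    rw [pow_eq_pow_mod k hXp, ← ZMod.val_natCast]
  have hXf (i : ZMod p) : X (f i) = f (i + 1) := by
    rw [← ZMod.natCast_zmod_val i, hf, ← Nat.cast_succ, hf, pow_succ', Module.End.mul_apply]
  have hYf (i : ZMod p) : Y (f i) = (i.val : F) • f (i - 1) := by
    obtain ⟨k, rfl⟩ : ∃ k : ℕ, i = (k + 1 : ℕ) := ⟨(i - 1).val, by simp⟩
    have h := LinearMap.congr_fun (lie_pow_succ_of_lie_eq_one hYX k) w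
    have hk : (((k + 1 : ℕ) : ZMod p).val : F) = (k + 1 : ℕ) := by
      rw [ZMod.natCast_val, ZMod.cast_natCast']
    rw [hf, hk, Nat.cast_smul_eq_nsmul, Nat.cast_succ, add_sub_cancel_right, hf]
    simpa [Ring.lie_def, hYw, -nsmul_eq_mul] using h
  have hspan : span F (Set.range f) = ⊤ := by
    refine (hirr _ ?_).resolve_left fun h ↦ hw.2 ?_
    · rintro T (rfl | rfl) <;> refine span_le.2 (Set.range_subset_iff.2 fun i ↦ mem_comap.2 ?_)
      · exact (hXf i).symm ▸ (subset_span ⟨i + 1, rfl⟩)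
      · exact (hYf i).symm ▸ (smul_mem _ _ (subset_span ⟨i - 1, rfl⟩))
    · simpa using span_eq_bot.1 h (f (0 : ℕ)) ⟨_, rfl⟩ ▸ (hf 0).symm
  have hcard : Fintype.card (ZMod p) = finrank F V := by
    have : Nontrivial V := nontrivial_of_ne w 0 hw.2
    refine le_antisymm ?_ (finrank_le_of_span_eq_top hspan)
    rw [ZMod.card]
    exact Nat.le_of_dvd finrank_pos
      ((CharP.cast_eq_zero_iff F p _).1 (natCast_finrank_eq_zero_of_lie_eq_one hYX))
  refine ⟨basisOfTopLeSpanOfCardEqFinrank f hspan.ge hcard, ?_⟩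
  simpa only [coe_basisOfTopLeSpanOfCardEqFinrank] using ⟨hXf, hYf⟩

end WeylPair

section WeylBasis

theorem pow_card_sub_self_eq_prod (K : Type*) {R : Type*} [Field K] [Fintype K] [CommRing R]
    [Algebra K R] (a : R) : a ^ Fintype.card K - a = ∏ i : K, (a - algebraMap K R i) := by
  have hmonic : (Polynomial.X ^ Fintype.card K - Polynomial.X : Polynomial K).Monic :=
    Polynomial.monic_X_pow_sub (by simpa using Fintype.one_lt_card)
  have hsplits : (Polynomial.X ^ Fintype.card K - Polynomial.X : Polynomial K).Splits := by
    simpa using (FiniteField.isSplittingField_sub K K).splits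
  have h := congrArg (Polynomial.aeval a) (hsplits.eq_prod_roots_of_monic hmonic)
  rw [FiniteField.roots_X_pow_card_sub_X, ← Finset.prod_eq_multiset_prod] at h
  simpa using h

theorem pow_eq_prod_of_mul_shift_eq {R : Type*} [CommRing R] [IsDomain R] {n : ℕ} [NeZero n]
    {b : R} {c d : ZMod n → R} (hc : c ≠ 0) (h : ∀ i, b * c (i - 1) = d i * c i) :
    b ^ n = ∏ i, d i := by
  obtain ⟨j, hj : c j ≠ 0⟩ := Function.ne_iff.1 hc
  by_cases hb : b = 0
  · have hd : d j = 0 := by simpa [hb, hj] using h j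
    rw [hb, zero_pow (NeZero.ne n), Finset.prod_eq_zero (Finset.mem_univ j) hd]
  have hne (i : ZMod n) : c i ≠ 0 := by
    intro hi
    have hshift (k : ℕ) : c (i - k) = 0 := by
      induction k with
      | zero => simpa using hi
      | succ k ih => simpa [ih, hb, sub_sub] using h (i - k)
    exact hj (by simpa using hshift (i - j).val)
  have hprod : ∏ i, c i ≠ 0 := Finset.prod_ne_zero_iff.2 fun i _ ↦ hne i
  refine mul_right_cancel₀ hprod ?_
  have hshift : ∏ i, c (i - 1) = ∏ i, c i := Equiv.prod_comp (Equiv.subRight (1 : ZMod n)) c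
  calc b ^ n * ∏ i, c i = ∏ i, b * c (i - 1) := by
        rw [Finset.prod_mul_distrib, Finset.prod_const, Finset.card_univ, ZMod.card, hshift]
    _ = (∏ i, d i) * ∏ i, c i := by simp_rw [h, Finset.prod_mul_distrib]

variable {F V : Type*} [Field F] [AddCommGroup V] [Module F V] {X Y : Module.End F V}

theorem exists_pow_char_sub_eq_of_hasEigenvalue {p : ℕ} [Fact p.Prime] [CharP F p] {α b τ : F}
    (e : Basis (ZMod p) F V) (hX : ∀ i, X (e i) = e (i + 1))
    (hY : ∀ i, Y (e i) = (α + (i.val : F)) • e i) (hτ : (Y + b • X).HasEigenvalue τ) :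
    ∃ t : F, b = t ^ p - t := by
  obtain ⟨v, hv⟩ := hτ.exists_hasEigenvector
  have hcoordX (i : ZMod p) : e.coord i ∘ₗ X = e.coord (i - 1) := e.ext fun j ↦ by
    simp [hX, Finsupp.single_apply, eq_sub_iff_add_eq]
  have hcoordY (i : ZMod p) : e.coord i ∘ₗ Y = (α + (i.val : F)) • e.coord i := e.ext fun j ↦ by
    by_cases hij : j = i <;> simp [hY, hij]
  have hrec (i : ZMod p) :
      b * e.coord (i - 1) v = (τ - α - (i.val : F)) * e.coord i v := by
    have h := congrArg (e.coord i) hv.apply_eq_smul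
    rw [LinearMap.add_apply, LinearMap.smul_apply, map_add, map_smul, map_smul,
      ← LinearMap.comp_apply (e.coord i) X, ← LinearMap.comp_apply (e.coord i) Y, hcoordX, hcoordY,
      LinearMap.smul_apply, smul_eq_mul, smul_eq_mul, smul_eq_mul] at h
    linear_combination h
  have hcoord : (fun i ↦ e.coord i v) ≠ 0 := fun h ↦
    hv.2 (e.forall_coord_eq_zero_iff.1 (congrFun h))
  let := ZMod.algebra F p
  have hpow : b ^ p = (τ - α) ^ p - (τ - α) := by
    have hprod := pow_card_sub_self_eq_prod (ZMod p) (τ - α)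
    rw [ZMod.card] at hprod
    rw [pow_eq_prod_of_mul_shift_eq hcoord hrec, hprod]
    exact Finset.prod_congr rfl fun i _ ↦ by rw [ZMod.natCast_val]; rfl
  refine ⟨τ - α - b, ?_⟩
  rw [sub_pow_char, hpow]
  ring

theorem sq_eq_one_add_of_hasEigenvalue [CharP F 2] {b τ : F} (e : Basis (ZMod 2) F V)
    (hX : ∀ i, X (e i) = e (i + 1)) (hY : ∀ i, Y (e i) = ((i.val + 1 : ℕ) : F) • e (i - 1))
    (hτ : (X + b • Y).HasEigenvalue τ) : τ ^ 2 = 1 + b := by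
  have hX₀ : X (e 0) = e 1 := hX 0
  have hX₁ : X (e 1) = e 0 := hX 1
  have hY₀ : Y (e 0) = e 1 := by simpa using hY 0
  have hY₁ : Y (e 1) = 0 := by simpa [ZMod.val_one, CharTwo.two_eq_zero] using hY 1
  have hsq : (X + b • Y) ^ 2 = (1 + b) • 1 := e.ext fun i ↦ by
    fin_cases i
    · change ((X + b • Y) ^ 2) (e 0) = ((1 + b) • (1 : Module.End F V)) (e 0)
      simp [sq, hX₀, hX₁, hY₀, hY₁, add_smul]
    · change ((X + b • Y) ^ 2) (e 1) = ((1 + b) • (1 : Module.End F V)) (e 1)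
      simp [sq, hX₀, hX₁, hY₀, hY₁, add_smul]
  obtain ⟨v, hv⟩ := (hτ.pow 2).exists_hasEigenvector
  refine smul_left_injective F hv.2 ?_
  simpa [hsq] using hv.apply_eq_smul.symm

theorem exists_charP_basis_of_lie_eq_one [FiniteDimensional F V] (hYX : ⁅Y, X⁆ = 1)
    (hirr : ActsIrreducibly {X, Y}) (hX : X.HasEigenvalue 1) (hY : Y.HasEigenvalue 0) :
    ∃ p : ℕ, p.Prime ∧ CharP F p ∧ ∃ e : Basis (ZMod p) F V,
      (∀ i, X (e i) = e (i + 1)) ∧ ∀ i, Y (e i) = ((i.val + 1 : ℕ) : F) • e (i - 1) := by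
  obtain ⟨v, hv⟩ := hX.exists_hasEigenvector
  have : Nontrivial V := nontrivial_of_ne v 0 hv.2
  obtain ⟨p, hp, hchar⟩ := exists_prime_charP_of_lie_eq_one hYX
  have : Fact p.Prime := ⟨hp⟩
  obtain ⟨e, hXe, hYe⟩ := exists_basis_of_lie_eq_one hYX hirr hX hY
  refine ⟨p, hp, hchar, e.reindex (Equiv.subRight 1), fun i ↦ by simp [hXe], fun i ↦ ?_⟩
  have hval : ((i + 1).val : F) = (i.val + 1 : ℕ) := by
    simp [ZMod.natCast_val, ZMod.cast_add]
  simp [hYe, -ZMod.natCast_val, hval]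

theorem exists_lie_eq_one_of_lie_eq_self [FiniteDimensional F V] {α : F} (hYX : ⁅Y, X⁆ = X)
    (hirr : ActsIrreducibly {X, Y}) (hX : X.HasEigenvalue 1) (hY : Y.HasEigenvalue α) :
    ∃ D : Module.End F V, ⁅D, X⁆ = 1 ∧ Y = D * X + α • 1 ∧ D.HasEigenvalue 0 := by
  obtain ⟨v, hv⟩ := hX.exists_hasEigenvector
  obtain ⟨w, hw⟩ := hY.exists_hasEigenvector
  have hX₀ : X ≠ 0 := by
    rintro rfl
    exact hv.2 (by simpa using hv.apply_eq_smul.symm)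
  have hker : LinearMap.ker X = ⊥ := hirr.ker_eq_bot_of_lie_eq_smul hX₀ fun S hS ↦ by
    rcases hS with rfl | rfl
    · exact ⟨0, by simp [Ring.lie_def]⟩
    · exact ⟨1, by simpa using hYX⟩
  obtain ⟨u, rfl⟩ := (LinearMap.isUnit_iff_ker_eq_bot X).2 hker
  refine ⟨(Y - α • 1) * ↑u⁻¹, ?_, by simp, ?_⟩
  · have hcomm : Y * ↑u - ↑u * Y = (u : Module.End F V) := hYX
    calc ⁅(Y - α • 1) * ↑u⁻¹, (u : Module.End F V)⁆
        = (Y * ↑u - ↑u * Y) * ↑u⁻¹ := by simp [Ring.lie_def, mul_sub, sub_mul, mul_assoc]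
      _ = 1 := by rw [hcomm, Units.mul_inv]
  · refine hasEigenvalue_of_apply_eq_smul (v := (u : Module.End F V) w)
      (fun h ↦ hw.2 (LinearMap.ker_eq_bot'.1 hker w h)) ?_
    rw [zero_smul, ← Module.End.mul_apply, mul_assoc, Units.inv_mul]
    simp [hw.apply_eq_smul]

theorem exists_charP_basis_of_lie_eq_self [FiniteDimensional F V] {α : F} (hYX : ⁅Y, X⁆ = X)
    (hirr : ActsIrreducibly {X, Y}) (hX : X.HasEigenvalue 1) (hY : Y.HasEigenvalue α) :
    ∃ p : ℕ, p.Prime ∧ CharP F p ∧ ∃ e : Basis (ZMod p) F V,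
      (∀ i, X (e i) = e (i + 1)) ∧ ∀ i, Y (e i) = (α + (i.val : F)) • e i := by
  obtain ⟨D, hDX, rfl, hD⟩ := exists_lie_eq_one_of_lie_eq_self hYX hirr hX hY
  have hirr' : ActsIrreducibly {X, D} := hirr.of_subset_adjoin <| by
    have hXmem : X ∈ Algebra.adjoin F {X, D} := Algebra.subset_adjoin (by simp)
    have hDmem : D ∈ Algebra.adjoin F {X, D} := Algebra.subset_adjoin (by simp)
    rintro _ (rfl | rfl)
    · exact hXmem
    · exact add_mem (mul_mem hDmem hXmem) (Subalgebra.smul_mem _ (one_mem _) α)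
  obtain ⟨v, hv⟩ := hX.exists_hasEigenvector
  have : Nontrivial V := nontrivial_of_ne v 0 hv.2
  obtain ⟨p, hp, hchar⟩ := exists_prime_charP_of_lie_eq_one hDX
  have : Fact p.Prime := ⟨hp⟩
  obtain ⟨e, hXe, hDe⟩ := exists_basis_of_lie_eq_one hDX hirr' hX hD
  refine ⟨p, hp, hchar, e.reindex (Equiv.addRight 1), fun i ↦ ?_, fun i ↦ ?_⟩
  · simp [hXe]
  · simp [hXe, hDe, add_smul, sub_eq_add_neg, add_comm]

end WeylBasis

section Ideals

theorem mem_sup_iff_exists_sub_mem {R M : Type*} [Ring R] [AddCommGroup M] [Module R M]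
    {P Q : Submodule R M} {u : M} : u ∈ P ⊔ Q ↔ ∃ s ∈ Q, u - s ∈ P := by
  rw [mem_sup]
  exact ⟨fun ⟨a, ha, s, hs, h⟩ ↦ ⟨s, hs, by simpa [← h] using ha⟩,
    fun ⟨s, hs, h⟩ ↦ ⟨u - s, h, s, hs, sub_add_cancel u s⟩⟩

variable {F : Type*} [Field F] {L : Type*} [AddCommGroup L] [Module F L]
variable {m : L →ₗ[F] L →ₗ[F] L} {A I J M S : Submodule F L}

theorem isIdeal_bot : IsIdeal m ⊥ := fun x y hy ↦ by simp [(mem_bot F).1 hy]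

theorem isIdeal_top : IsIdeal m ⊤ := fun _ _ _ ↦ ⟨mem_top, mem_top⟩

namespace IsIdeal

theorem isIdealOf_top (hI : IsIdeal m I) : IsIdealOf m ⊤ I := ⟨le_top, fun x _ ↦ hI x⟩

theorem mul_sub_mul_mem (hA : IsIdeal m A) {x x' y y' : L} (hx : x - x' ∈ A) (hy : y - y' ∈ A) :
    m x y - m x' y' ∈ A := by
  have h : m x y - m x' y' = m (x - x') y + m x' (y - y') := by
    simp only [map_sub, LinearMap.sub_apply]; abel
  rw [h]
  exact add_mem (hA y _ hx).2 (hA x' _ hy).1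

theorem inf (hI : IsIdeal m I) (hJ : IsIdeal m J) : IsIdeal m (I ⊓ J) := fun x y hy ↦
  ⟨⟨(hI x y hy.1).1, (hJ x y hy.2).1⟩, ⟨(hI x y hy.1).2, (hJ x y hy.2).2⟩⟩

theorem isSubalg_sup (hA : IsIdeal m A) (hS : IsSubalg m S) : IsSubalg m (A ⊔ S) := by
  intro x hx y hy
  obtain ⟨s, hs, hxs⟩ := mem_sup_iff_exists_sub_mem.1 hx
  obtain ⟨t, ht, hyt⟩ := mem_sup_iff_exists_sub_mem.1 hy
  exact mem_sup_iff_exists_sub_mem.2 ⟨m s t, hS s hs t ht, hA.mul_sub_mul_mem hxs hyt⟩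

theorem sup_isIdealOf (hA : IsIdeal m A) (hAM : A ⊔ M = ⊤) (hI : IsIdealOf m M I) :
    IsIdeal m (A ⊔ I) := by
  intro x y hy
  obtain ⟨s, hs, hxs⟩ := mem_sup_iff_exists_sub_mem.1 (hAM ▸ mem_top : x ∈ A ⊔ M)
  obtain ⟨t, ht, hyt⟩ := mem_sup_iff_exists_sub_mem.1 hy
  exact ⟨mem_sup_iff_exists_sub_mem.2 ⟨m s t, (hI.2 s hs t ht).1, hA.mul_sub_mul_mem hxs hyt⟩,
    mem_sup_iff_exists_sub_mem.2 ⟨m t s, (hI.2 s hs t ht).2, hA.mul_sub_mul_mem hyt hxs⟩⟩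

theorem inf_isSubalg (hA : IsIdeal m A) (hab : ∀ a ∈ A, ∀ b ∈ A, m a b = 0) (hAM : A ⊔ M = ⊤)
    (hM : IsSubalg m M) : IsIdeal m (A ⊓ M) := by
  intro x y hy
  obtain ⟨s, hs, hxs⟩ := mem_sup_iff_exists_sub_mem.1 (hAM ▸ mem_top : x ∈ A ⊔ M)
  have hl : m x y = m s y := by simpa [sub_eq_zero] using hab _ hxs y hy.1
  have hr : m y x = m y s := by simpa [sub_eq_zero] using hab y hy.1 _ hxs
  exact ⟨⟨(hA x y hy.1).1, hl ▸ hM s hs y hy.2⟩, ⟨(hA x y hy.1).2, hr ▸ hM y hy.2 s hs⟩⟩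

/-- The left multiplications by the elements of the algebra, restricted to an ideal `A`; for a
Leibniz algebra this is the left action on `A`. -/
def leftMul (hA : IsIdeal m A) : L →ₗ[F] Module.End F A where
  toFun x := (m x).restrict fun a ha ↦ (hA x a ha).1
  map_add' x y := by ext a; simp
  map_smul' c x := by ext a; simp

@[simp]
theorem coe_leftMul_apply (hA : IsIdeal m A) (x : L) (a : A) : (hA.leftMul x a : L) = m x a := rfl

theorem leftMul_mul (hm : IsLeibniz m) (hA : IsIdeal m A) (x y : L) :
    hA.leftMul (m x y) = ⁅hA.leftMul x, hA.leftMul y⁆ := by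
  ext a
  simp [Ring.lie_def, hm x y a]

end IsIdeal

theorem exists_isMinIdeal_le [FiniteDimensional F L] (hI : IsIdeal m I) (hI₀ : I ≠ ⊥) :
    ∃ A, IsMinIdeal m A ∧ A ≤ I := by
  obtain ⟨A, ⟨hA, hA₀, hAI⟩, hmin⟩ := (wellFounded_lt (α := Submodule F L)).has_min
    {J | IsIdeal m J ∧ J ≠ ⊥ ∧ J ≤ I} ⟨I, hI, hI₀, le_rfl⟩
  refine ⟨A, ⟨hA, hA₀, fun J hJ hJA ↦ ?_⟩, hAI⟩
  by_contra! h
  exact hmin J ⟨hJ, h.1, hJA.trans hAI⟩ (hJA.lt_of_ne h.2)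

end Ideals

section LeibnizKernel

variable {F : Type*} [Field F] {L : Type*} [AddCommGroup L] [Module F L]
variable {m : L →ₗ[F] L →ₗ[F] L}

theorem mul_self_mem_leibIdeal (x : L) : m x x ∈ leibIdeal m := subset_span ⟨x, rfl⟩

theorem isLie_of_leibIdeal_eq_bot (h : leibIdeal m = ⊥) : IsLie m := by
  have hsq (x : L) : m x x = 0 := (mem_bot F).1 (h ▸ mul_self_mem_leibIdeal x)
  intro x y
  refine eq_neg_of_add_eq_zero_left ?_
  simpa [hsq, add_comm] using hsq (x + y)

theorem IsLeibniz.mul_eq_zero_of_mem_leibIdeal (hm : IsLeibniz m) {z : L} (hz : z ∈ leibIdeal m)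
    (x : L) : m z x = 0 := by
  have hle : leibIdeal m ≤ LinearMap.ker (m.flip x) := span_le.2 <| by
    rintro _ ⟨y, rfl⟩
    simpa using hm y y x
  exact hle hz

theorem IsLeibniz.isIdeal_leibIdeal (hm : IsLeibniz m) : IsIdeal m (leibIdeal m) := by
  intro x z hz
  refine ⟨?_, by simp [hm.mul_eq_zero_of_mem_leibIdeal hz]⟩
  have hle : leibIdeal m ≤ (leibIdeal m).comap (m x) := span_le.2 <| by
    rintro _ ⟨y, rfl⟩
    have hsq : m x (m y y) = m (m x y + y) (m x y + y) - m (m x y) (m x y) - m y y := by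
      rw [hm]; simp only [map_add, LinearMap.add_apply]; abel
    rw [SetLike.mem_coe, mem_comap, hsq]
    exact sub_mem (sub_mem (mul_self_mem_leibIdeal _) (mul_self_mem_leibIdeal _))
      (mul_self_mem_leibIdeal _)
  exact hle hz

end LeibnizKernel

section Solvable

variable {F : Type*} [Field F] {L : Type*} [AddCommGroup L] [Module F L]
variable {m : L →ₗ[F] L →ₗ[F] L} {A I : Submodule F L}

theorem IsLeibniz.isIdeal_mprod_self (hm : IsLeibniz m) (hI : IsIdeal m I) :
    IsIdeal m (mprod m I I) := by
  have hmul {a b : L} (ha : a ∈ I) (hb : b ∈ I) : m a b ∈ mprod m I I := apply_mem_map₂ _ ha hb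
  intro x
  have hl : mprod m I I ≤ (mprod m I I).comap (m x) := map₂_le.2 fun a ha b hb ↦ by
    rw [mem_comap, hm]
    exact add_mem (hmul (hI x a ha).1 hb) (hmul ha (hI x b hb).1)
  have hr : mprod m I I ≤ (mprod m I I).comap (m.flip x) := map₂_le.2 fun a ha b hb ↦ by
    rw [mem_comap, LinearMap.flip_apply, ← sub_eq_of_eq_add (hm a b x)]
    exact sub_mem (hmul ha (hI x b hb).2) (hmul hb (hI x a ha).2)
  exact fun y hy ↦ ⟨hl hy, hr hy⟩

theorem IsMinIdeal.mul_eq_zero (hm : IsLeibniz m) (hsolv : IsSolvableAlg m)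
    (hA : IsMinIdeal m A) : ∀ a ∈ A, ∀ b ∈ A, m a b = 0 := by
  rcases hA.2.2 _ (hm.isIdeal_mprod_self hA.1) (map₂_le.2 fun a _ b hb ↦ (hA.1 a b hb).1) with h | h
  · exact fun a ha b hb ↦ (mem_bot F).1 (h ▸ apply_mem_map₂ m ha hb)
  · obtain ⟨n, hn⟩ := hsolv
    have hle (k : ℕ) : A ≤ derSeries m ⊤ k := by
      induction k with
      | zero => exact le_top
      | succ k ih => exact h.ge.trans (map₂_le_map₂ ih ih)
    exact absurd (le_bot_iff.1 (hn ▸ hle n)) hA.2.1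

theorem IsMinIdeal.exists_isCompl (hphi : frattiniIdeal m = ⊥) (hA : IsMinIdeal m A)
    (hab : ∀ a ∈ A, ∀ b ∈ A, m a b = 0) : ∃ M, IsSubalg m M ∧ IsCompl A M := by
  have hnot : ¬ A ≤ frattiniSub m := fun h ↦ hA.2.1 <| le_bot_iff.1 <| hphi ▸ le_sSup ⟨hA.1, h⟩
  obtain ⟨M, ⟨hM, -, hmax⟩, hAM⟩ : ∃ M, IsMaxSubalg m M ∧ ¬ A ≤ M := by
    simpa [frattiniSub, le_sInf_iff] using hnot
  have hsup : A ⊔ M = ⊤ :=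
    (hmax _ (hA.1.isSubalg_sup hM) le_sup_right).resolve_left fun h ↦ hAM (h ▸ le_sup_left)
  have hinf : A ⊓ M = ⊥ :=
    (hA.2.2 _ (hA.1.inf_isSubalg hab hsup hM) inf_le_left).resolve_right fun h ↦
      hAM (inf_eq_left.1 h)
  exact ⟨M, hM, disjoint_iff.2 hinf, codisjoint_iff.2 hsup⟩

end Solvable

section Supersolvable

variable {F : Type*} [Field F] {L : Type*} [AddCommGroup L] [Module F L]
variable {m : L →ₗ[F] L →ₗ[F] L} {A M I S : Submodule F L}

theorem sup_span_singleton_eq_of_finrank_eq_add_one {P Q : Submodule F L} (hPQ : P ≤ Q)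
    (hrank : finrank F Q = finrank F P + 1) {v : L} (hv : v ∈ Q) (hvP : v ∉ P) :
    P ⊔ F ∙ v = Q := by
  have : FiniteDimensional F Q := Module.finite_of_finrank_pos (by omega)
  have hle : P ⊔ F ∙ v ≤ Q := sup_le hPQ ((span_singleton_le_iff_mem v Q).2 hv)
  have : FiniteDimensional F ↥(P ⊔ F ∙ v) := finiteDimensional_of_le hle
  have hlt : P < P ⊔ F ∙ v := lt_of_le_of_ne le_sup_left fun h ↦
    hvP (h ▸ mem_sup_right (mem_span_singleton_self v))
  exact eq_of_le_of_finrank_le hle (hrank ▸ finrank_lt_finrank_of_lt hlt)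

namespace IsSupersolvable

-- `E` is the last term of the chain which does not meet `P`.
theorem exists_isIdealOf_disjoint (hS : IsSupersolvable m S) {P : Set L} (hPS : P ⊆ S)
    (hP : P.Nonempty) (hP₀ : 0 ∉ P) :
    ∃ E, IsIdealOf m S E ∧ Disjoint (E : Set L) P ∧
      ∃ v ∈ P, ∀ s ∈ S, m s v ∈ E ⊔ F ∙ v ∧ m v s ∈ E ⊔ F ∙ v := by
  classical
  obtain ⟨n, c, hc₀, hcn, hmono, hideal, hrank⟩ := hS
  have hex : ∃ i, ((c i : Set L) ∩ P).Nonempty := ⟨n, by rwa [hcn, Set.inter_eq_right.2 hPS]⟩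
  obtain ⟨v, hv, hvP⟩ := Nat.find_spec hex
  have hle : Nat.find hex ≤ n := Nat.find_min' hex (by rwa [hcn, Set.inter_eq_right.2 hPS])
  have hmin {i : ℕ} : i < Nat.find hex → ¬ ((c i : Set L) ∩ P).Nonempty := Nat.find_min hex
  generalize Nat.find hex = j at hv hle hmin
  rcases j with _ | i
  · rw [hc₀, SetLike.mem_coe, mem_bot] at hv
    exact absurd (hv ▸ hvP) hP₀
  have hdisj : Disjoint (c i : Set L) P :=
    Set.disjoint_iff_inter_eq_empty.2 (Set.not_nonempty_iff_eq_empty.1 (hmin i.lt_succ_self))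
  refine ⟨c i, hideal i (by omega), hdisj, v, hvP, fun s hs ↦ ?_⟩
  rw [sup_span_singleton_eq_of_finrank_eq_add_one (hmono i hle)
    (by rw [hrank _ hle, hrank i (by omega)]) hv (Set.disjoint_right.1 hdisj hvP)]
  exact (hideal _ hle).2 s hs v hv

theorem exists_eigenvector (hS : IsSupersolvable m S) (hI : IsIdealOf m S I) (hI₀ : I ≠ ⊥) :
    ∃ v ∈ I, v ≠ 0 ∧ ∀ s ∈ S, m s v ∈ F ∙ v ∧ m v s ∈ F ∙ v := by
  obtain ⟨w, hw, hw₀⟩ := exists_mem_ne_zero_of_ne_bot hI₀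
  obtain ⟨E, -, hdisj, v, ⟨hv, hv₀⟩, hEv⟩ := hS.exists_isIdealOf_disjoint
    (P := {w | w ∈ I ∧ w ≠ 0}) (fun w hw ↦ hI.1 hw.1) ⟨w, hw, hw₀⟩ (by simp)
  have hline {u : L} (hu : u ∈ I) (huE : u ∈ E ⊔ F ∙ v) : u ∈ F ∙ v := by
    obtain ⟨w, hw, huw⟩ := mem_sup_iff_exists_sub_mem.1 huE
    have hwI : w ∈ I := (span_singleton_le_iff_mem v I).2 hv hw
    by_contra huv
    exact Set.disjoint_left.1 hdisj huw ⟨sub_mem hu hwI, sub_ne_zero.2 fun h ↦ huv (h ▸ hw)⟩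
  exact ⟨v, hv, hv₀, fun s hs ↦
    ⟨hline (hI.2 s hs v hv).1 (hEv s hs).1, hline (hI.2 s hs v hv).2 (hEv s hs).2⟩⟩

-- Modulo a suitable ideal `E` of `S`, `v` is an eigenvector of both `s` and `t`, hence killed by
-- their commutator.
theorem eq_zero_of_mul_mul_eq_smul (hm : IsLeibniz m) (hS : IsSupersolvable m S) {s t v : L}
    (hs : s ∈ S) (ht : t ∈ S) (hv : v ∈ S) (hv₀ : v ≠ 0) {κ : F} (h : m (m s t) v = κ • v) :
    κ = 0 := by
  obtain ⟨E, hE, hdisj, w, hw, hEv⟩ :=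
    hS.exists_isIdealOf_disjoint (P := {v}) (by simpa using hv) ⟨v, rfl⟩ (by simpa using hv₀.symm)
  obtain rfl : v = w := hw.symm
  have hmod {s : L} (hs : s ∈ S) : ∃ a : F, m s v - a • v ∈ E := by
    obtain ⟨w, hw, hsw⟩ := mem_sup_iff_exists_sub_mem.1 (hEv s hs).1
    obtain ⟨a, rfl⟩ := mem_span_singleton.1 hw
    exact ⟨a, hsw⟩
  obtain ⟨a, ha⟩ := hmod hs
  obtain ⟨b, hb⟩ := hmod ht
  have hκ : κ • v = m s (m t v - b • v) - m t (m s v - a • v)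
      + b • (m s v - a • v) - a • (m t v - b • v) := by
    rw [← h, map_sub, map_sub, map_smul, map_smul, hm s t v]
    module
  have hκE : κ • v ∈ E := by
    rw [hκ]
    exact sub_mem (add_mem (sub_mem (hE.2 s hs _ hb).1 (hE.2 t ht _ ha).1) (smul_mem _ _ ha))
      (smul_mem _ _ hb)
  by_contra hκ₀
  exact Set.disjoint_right.1 hdisj rfl ((smul_mem_iff E hκ₀).1 hκE)

end IsSupersolvable

theorem isSupersolvable_bot : IsSupersolvable m ⊥ :=
  ⟨0, fun _ ↦ ⊥, rfl, rfl, by simp, fun _ _ ↦ ⟨le_rfl, fun x _ ↦ isIdeal_bot x⟩, by simp⟩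

theorem IsSupersolvable.top_of_isCompl_of_finrank_eq_one [FiniteDimensional F L]
    (hM : IsSupersolvable m M) (hA : IsIdeal m A) (hAM : IsCompl A M) (hrank : finrank F A = 1) :
    IsSupersolvable m ⊤ := by
  obtain ⟨n, c, -, hcn, hmono, hideal, hcrank⟩ := hM
  refine ⟨n + 1, fun i ↦ i.casesOn ⊥ fun i ↦ A ⊔ c i, rfl,
    by simp [hcn, hAM.sup_eq_top], ?_, ?_, ?_⟩
  · rintro (_ | i) hi
    · exact bot_le
    · exact sup_le_sup_left (hmono i (by omega)) A
  · rintro (_ | i) hi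
    · exact isIdeal_bot.isIdealOf_top
    · exact (hA.sup_isIdealOf hAM.sup_eq_top (hideal i (by omega))).isIdealOf_top
  · rintro (_ | i) hi
    · exact finrank_bot F L
    · have hdisj : A ⊓ c i = ⊥ := (hAM.disjoint.mono_right (hideal i (by omega)).1).eq_bot
      have hsum := finrank_sup_add_finrank_inf_eq A (c i)
      rw [hdisj, finrank_bot, hrank, hcrank i (by omega)] at hsum
      change finrank F ↥(A ⊔ c i) = i + 1
      omega

end Supersolvable

section MinimallyNonSupersolvable

variable {F : Type*} [Field F] {L : Type*} [AddCommGroup L] [Module F L]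
variable {m : L →ₗ[F] L →ₗ[F] L} {A A' B : Submodule F L}

/-- The algebra is not supersolvable although all its proper subalgebras are. -/
structure IsMinimallyNonSupersolvable (m : L →ₗ[F] L →ₗ[F] L) : Prop where
  not_isSupersolvable : ¬ IsSupersolvable m ⊤
  isSupersolvable_of_ne_top : ∀ S, IsSubalg m S → S ≠ ⊤ → IsSupersolvable m S

/-- The situation to which the structure theorem reduces: the subalgebra `B` is supersolvable and
acts faithfully and irreducibly, by left multiplication, on the ideal `A` of dimension at least
two, and `A + S` is supersolvable for every proper subalgebra `S` of `B`. -/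
structure IsCriticalAction (hA : IsIdeal m A) (B : Submodule F L) : Prop where
  isSubalg : IsSubalg m B
  isSupersolvable : IsSupersolvable m B
  faithful : Set.InjOn hA.leftMul B
  irreducible : ActsIrreducibly (hA.leftMul '' B)
  one_lt_finrank : 1 < finrank F A
  isSupersolvable_sup : ∀ S ≤ B, IsSubalg m S → S ≠ B → IsSupersolvable m (A ⊔ S)

theorem IsCriticalAction.mul_self (hm : IsLeibniz m) {hA : IsIdeal m A}
    (h : IsCriticalAction hA B) {b : L} (hb : b ∈ B) : m b b = 0 :=
  h.faithful (h.isSubalg b hb b hb) B.zero_mem <| by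
    rw [IsIdeal.leftMul_mul hm, map_zero, Ring.lie_def, sub_self]

-- The projection to `B` along `A` maps `A'` isomorphically onto an ideal of `B`, which contains an
-- ideal of dimension one because `B` is supersolvable.
theorem IsMinIdeal.finrank_eq_one_of_inf_eq_bot (hA : IsIdeal m A) (hAB : IsCompl A B)
    (hB : IsSubalg m B) (hsuper : IsSupersolvable m B) (hA' : IsMinIdeal m A')
    (hAA' : A ⊓ A' = ⊥) : finrank F A' = 1 := by
  have hI : IsIdealOf m B (B ⊓ (A ⊔ A')) := by
    have hsum : IsIdeal m (A ⊔ A') := hA.sup_isIdealOf (M := ⊤) (by simp) hA'.1.isIdealOf_top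
    exact ⟨inf_le_left, fun x hx y hy ↦ ⟨⟨hB x hx y hy.1, (hsum x y hy.2).1⟩,
      ⟨hB y hy.1 x hx, (hsum x y hy.2).2⟩⟩⟩
  have hI₀ : B ⊓ (A ⊔ A') ≠ ⊥ := by
    intro hbot
    have heq : A = A ⊔ A' := eq_of_le_of_inf_le_of_le_sup (z := B) le_sup_left
      (by simp [inf_comm _ B, hbot]) (by simp [hAB.sup_eq_top])
    exact hA'.2.1 (by rw [← hAA', inf_eq_right.2 (heq ▸ le_sup_right)])
  obtain ⟨v, ⟨hvB, hv⟩, hv₀, hline⟩ := hsuper.exists_eigenvector hI hI₀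
  obtain ⟨a, ha, hva⟩ := mem_sup_iff_exists_sub_mem.1 hv
  have hav : a - v ∈ A := by simpa using neg_mem hva
  have ha₀ : a ≠ 0 := by
    rintro rfl
    exact hv₀ (disjoint_def.1 hAB.disjoint v (by simpa using hva) hvB)
  have hlift {u w : L} (hu : u ∈ A') (hw : w ∈ F ∙ v) (huw : u - w ∈ A) : u ∈ F ∙ a := by
    obtain ⟨c, rfl⟩ := mem_span_singleton.1 hw
    refine mem_span_singleton.2 ⟨c, (sub_eq_zero.1 ((mem_bot F).1 (hAA' ▸ ⟨?_, ?_⟩))).symm⟩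
    · have h := sub_mem huw (A.smul_mem c hav)
      rwa [smul_sub, sub_sub_sub_cancel_right] at h
    · exact sub_mem hu (A'.smul_mem c ha)
  have hideal : IsIdeal m (F ∙ a) := by
    intro x y hy
    obtain ⟨c, rfl⟩ := mem_span_singleton.1 hy
    obtain ⟨s, hs, hxs⟩ := mem_sup_iff_exists_sub_mem.1 (hAB.sup_eq_top ▸ mem_top : x ∈ A ⊔ B)
    have hl := hlift (hA'.1 x a ha).1 (hline s hs).1 (hA.mul_sub_mul_mem hxs hav)
    have hr := hlift (hA'.1 x a ha).2 (hline s hs).2 (hA.mul_sub_mul_mem hav hxs)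
    simpa using ⟨smul_mem _ c hl, smul_mem _ c hr⟩
  have heq := (hA'.2.2 _ hideal ((span_singleton_le_iff_mem a A').2 ha)).resolve_left (by simpa)
  rw [← heq, finrank_span_singleton ha₀]

theorem mul_mem_of_isLie_or_mul_eq_zero (h : IsLie m ∨ ∀ a ∈ A, ∀ x, m a x = 0) {W : Submodule F L}
    {a x : L} (ha : a ∈ A) (hxa : m x a ∈ W) : m a x ∈ W := by
  rcases h with h | h
  · rw [h]; exact neg_mem hxa
  · rw [h a ha]; exact zero_mem W

theorem IsMinIdeal.actsIrreducibly (hA : IsMinIdeal m A) (hab : ∀ a ∈ A, ∀ b ∈ A, m a b = 0)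
    (hAB : A ⊔ B = ⊤) (hright : IsLie m ∨ ∀ a ∈ A, ∀ x, m a x = 0) :
    ActsIrreducibly (hA.1.leftMul '' B) := by
  intro W hW
  have hideal : IsIdeal m (W.map A.subtype) := by
    rintro x _ ⟨w, hw, rfl⟩
    obtain ⟨s, hs, hxs⟩ := mem_sup_iff_exists_sub_mem.1 (hAB ▸ mem_top : x ∈ A ⊔ B)
    have hxw : m x w = m s w := by simpa [sub_eq_zero] using hab _ hxs w w.2
    have hmem : m x w ∈ W.map A.subtype := ⟨_, hW _ (Set.mem_image_of_mem _ hs) hw, hxw.symm⟩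
    exact ⟨hmem, mul_mem_of_isLie_or_mul_eq_zero hright w.2 hmem⟩
  rcases hA.2.2 _ hideal (map_subtype_le A W) with h | h
  · exact .inl (map_injective_of_injective A.injective_subtype (by rw [h, Submodule.map_bot]))
  · exact .inr (map_injective_of_injective A.injective_subtype (by rw [h, map_subtype_top]))

theorem IsIdeal.isIdeal_inf_ker_leftMul (hm : IsLeibniz m) (hA : IsIdeal m A) (hB : IsSubalg m B)
    (hAB : A ⊔ B = ⊤) (hright : IsLie m ∨ ∀ a ∈ A, ∀ x, m a x = 0) :
    IsIdeal m (B ⊓ LinearMap.ker hA.leftMul) := by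
  intro x y hy
  obtain ⟨s, hs, hxs⟩ := mem_sup_iff_exists_sub_mem.1 (hAB ▸ mem_top : x ∈ A ⊔ B)
  have hy₀ : hA.leftMul y = 0 := hy.2
  have hann : m y (x - s) = 0 := congrArg Subtype.val (LinearMap.congr_fun hy₀ ⟨x - s, hxs⟩)
  have hann' : m (x - s) y = 0 :=
    (mem_bot F).1 (mul_mem_of_isLie_or_mul_eq_zero hright hxs ((mem_bot F).2 hann))
  have hl : m x y = m s y := by simpa [sub_eq_zero] using hann'
  have hr : m y x = m y s := by simpa [sub_eq_zero] using hann
  rw [hl, hr]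
  exact ⟨⟨hB s hs y hy.1, by simp [leftMul_mul hm, hy₀, Ring.lie_def]⟩,
    ⟨hB y hy.1 s hs, by simp [leftMul_mul hm, hy₀, Ring.lie_def]⟩⟩

namespace IsMinimallyNonSupersolvable

theorem exists_isCompl (h : IsMinimallyNonSupersolvable m) (hm : IsLeibniz m)
    (hsolv : IsSolvableAlg m) (hphi : frattiniIdeal m = ⊥) (hA : IsMinIdeal m A) :
    ∃ B, IsSubalg m B ∧ IsCompl A B ∧ IsSupersolvable m B := by
  obtain ⟨B, hB, hAB⟩ := hA.exists_isCompl hphi (hA.mul_eq_zero hm hsolv)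
  refine ⟨B, hB, hAB, h.isSupersolvable_of_ne_top B hB fun htop ↦ hA.2.1 ?_⟩
  rw [← hAB.inf_eq_bot, htop, inf_top_eq]

variable [FiniteDimensional F L]

theorem exists_isMinIdeal (h : IsMinimallyNonSupersolvable m) : ∃ A, IsMinIdeal m A := by
  have htop : (⊤ : Submodule F L) ≠ ⊥ := fun htop ↦
    h.not_isSupersolvable (htop ▸ isSupersolvable_bot)
  exact (exists_isMinIdeal_le isIdeal_top htop).imp fun _ ↦ And.left

theorem one_lt_finrank (h : IsMinimallyNonSupersolvable m) (hm : IsLeibniz m)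
    (hsolv : IsSolvableAlg m) (hphi : frattiniIdeal m = ⊥) (hA : IsMinIdeal m A) :
    1 < finrank F A := by
  obtain ⟨B, -, hAB, hsuper⟩ := h.exists_isCompl hm hsolv hphi hA
  have hne : finrank F A ≠ 1 := fun h₁ ↦
    h.not_isSupersolvable (hsuper.top_of_isCompl_of_finrank_eq_one hA.1 hAB h₁)
  have hpos : finrank F A ≠ 0 := fun h₀ ↦ hA.2.1 (finrank_eq_zero.1 h₀)
  omega

theorem isMinIdeal_unique (h : IsMinimallyNonSupersolvable m) (hm : IsLeibniz m)
    (hsolv : IsSolvableAlg m) (hphi : frattiniIdeal m = ⊥) (hA : IsMinIdeal m A)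
    (hA' : IsMinIdeal m A') : A' = A := by
  by_contra hne
  obtain ⟨B, hB, hAB, hsuper⟩ := h.exists_isCompl hm hsolv hphi hA
  have hinf : A ⊓ A' = ⊥ := by
    refine (hA'.2.2 _ (hA.1.inf hA'.1) inf_le_right).resolve_right fun hle ↦ ?_
    exact (hA.2.2 A' hA'.1 (inf_eq_right.1 hle)).elim hA'.2.1 hne
  exact (h.one_lt_finrank hm hsolv hphi hA').ne'
    (hA'.finrank_eq_one_of_inf_eq_bot hA.1 hAB hB hsuper hinf)

theorem isLie_or_le_leibIdeal (h : IsMinimallyNonSupersolvable m) (hm : IsLeibniz m)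
    (hsolv : IsSolvableAlg m) (hphi : frattiniIdeal m = ⊥) (hA : IsMinIdeal m A) :
    IsLie m ∨ A ≤ leibIdeal m := by
  refine or_iff_not_imp_left.2 fun hLie ↦ ?_
  obtain ⟨A', hA', hle⟩ := exists_isMinIdeal_le hm.isIdeal_leibIdeal fun hbot ↦
    hLie (isLie_of_leibIdeal_eq_bot hbot)
  rwa [← h.isMinIdeal_unique hm hsolv hphi hA hA']

theorem exists_isCriticalAction (h : IsMinimallyNonSupersolvable m) (hm : IsLeibniz m)
    (hsolv : IsSolvableAlg m) (hphi : frattiniIdeal m = ⊥) (hA : IsMinIdeal m A) :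
    ∃ B, IsCompl A B ∧ IsCriticalAction hA.1 B := by
  obtain ⟨B, hB, hAB, hsuper⟩ := h.exists_isCompl hm hsolv hphi hA
  have hright : IsLie m ∨ ∀ a ∈ A, ∀ x, m a x = 0 :=
    (h.isLie_or_le_leibIdeal hm hsolv hphi hA).imp_right fun hle a ha ↦
      hm.mul_eq_zero_of_mem_leibIdeal (hle ha)
  have hdisj : Disjoint B (LinearMap.ker hA.1.leftMul) := by
    rw [disjoint_iff]
    by_contra hne
    obtain ⟨A', hA', hle⟩ := exists_isMinIdeal_le
      (hA.1.isIdeal_inf_ker_leftMul hm hB hAB.sup_eq_top hright) hne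
    rw [h.isMinIdeal_unique hm hsolv hphi hA hA'] at hle
    exact hA.2.1 (hAB.disjoint.eq_bot_of_le (hle.trans inf_le_left))
  refine ⟨B, hAB, hB, hsuper, LinearMap.injOn_of_disjoint_ker le_rfl hdisj,
    hA.actsIrreducibly (hA.mul_eq_zero hm hsolv) hAB.sup_eq_top hright,
    h.one_lt_finrank hm hsolv hphi hA, fun S hSB hS hne ↦ ?_⟩
  refine h.isSupersolvable_of_ne_top _ (hA.1.isSubalg_sup hS) fun htop ↦ hne ?_
  refine eq_of_le_of_inf_le_of_le_sup (z := A) hSB ?_ ?_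
  · simp [hAB.symm.inf_eq_bot]
  · simp [sup_comm S, htop]

theorem isLie_or_eq_leibIdeal (h : IsMinimallyNonSupersolvable m) (hm : IsLeibniz m)
    (hsolv : IsSolvableAlg m) (hphi : frattiniIdeal m = ⊥) (hA : IsMinIdeal m A) :
    IsLie m ∨ (A = leibIdeal m ∧ ∀ a ∈ A, ∀ x, m a x = 0) := by
  obtain ⟨B, hAB, hcrit⟩ := h.exists_isCriticalAction hm hsolv hphi hA
  refine (h.isLie_or_le_leibIdeal hm hsolv hphi hA).imp_right fun hle ↦
    ⟨hle.antisymm (span_le.2 ?_), fun a ha ↦ hm.mul_eq_zero_of_mem_leibIdeal (hle ha)⟩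
  rintro _ ⟨x, rfl⟩
  obtain ⟨s, hs, hxs⟩ := mem_sup_iff_exists_sub_mem.1 (hAB.sup_eq_top ▸ mem_top : x ∈ A ⊔ B)
  simpa [hcrit.mul_self hm hs] using hA.1.mul_sub_mul_mem hxs hxs

end IsMinimallyNonSupersolvable

end MinimallyNonSupersolvable

section CoeBasis

variable {R M ι : Type*} [Ring R] [AddCommGroup M] [Module R M] {N : Submodule R M}

theorem linearIndependent_coe_basis (e : Basis ι R N) :
    LinearIndependent R fun i ↦ (e i : M) :=
  e.linearIndependent.map' N.subtype N.ker_subtype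

theorem span_range_coe_basis (e : Basis ι R N) : span R (Set.range fun i ↦ (e i : M)) = N := by
  have hspan : span R (N.subtype '' Set.range e) = N := by
    rw [← map_span, e.span_eq, map_subtype_top]
  rwa [← Set.range_comp] at hspan

end CoeBasis

section GenBy

variable {F : Type*} [Field F] {L : Type*} [AddCommGroup L] [Module F L]
variable {m : L →ₗ[F] L →ₗ[F] L} {A : Submodule F L}

theorem isSubalg_span {s : Set L} (h : ∀ x ∈ s, ∀ y ∈ s, m x y ∈ span F s) :
    IsSubalg m (span F s) := by
  have hle : mprod m (span F s) (span F s) ≤ span F s := by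
    rw [mprod, map₂_span_span, span_le]
    rintro _ ⟨x, hx, y, hy, rfl⟩
    exact h x hx y hy
  exact fun x hx y hy ↦ hle (apply_mem_map₂ m hx hy)

theorem IsSubalg.genBy_eq_of_span_eq {s : Set L} (hA : IsSubalg m A) (hs : span F s = A) :
    genBy m s = A :=
  le_antisymm (sInf_le ⟨hA, hs ▸ subset_span⟩) (le_sInf fun _ hS ↦ hs ▸ span_le.2 hS.2)

end GenBy

section StronglySolvable

variable {F : Type*} [Field F] {L : Type*} [AddCommGroup L] [Module F L]
variable {m : L →ₗ[F] L →ₗ[F] L} {A : Submodule F L}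

theorem IsIdeal.isStronglySolvable_top (hA : IsIdeal m A) (hab : ∀ a ∈ A, ∀ b ∈ A, m a b = 0)
    {x : L} (hxx : m x x = 0) (hsup : A ⊔ F ∙ x = ⊤) : IsStronglySolvable m ⊤ := by
  have hsq : mprod m ⊤ ⊤ ≤ A := by
    refine map₂_le.2 fun u _ w _ ↦ ?_
    obtain ⟨s, hs, hus⟩ := mem_sup_iff_exists_sub_mem.1 (hsup ▸ mem_top : u ∈ A ⊔ F ∙ x)
    obtain ⟨t, ht, hwt⟩ := mem_sup_iff_exists_sub_mem.1 (hsup ▸ mem_top : w ∈ A ⊔ F ∙ x)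
    obtain ⟨c, rfl⟩ := mem_span_singleton.1 hs
    obtain ⟨d, rfl⟩ := mem_span_singleton.1 ht
    simpa [hxx] using hA.mul_sub_mul_mem hus hwt
  exact ⟨1, le_bot_iff.1 (map₂_le.2 fun u hu w hw ↦ (mem_bot F).2 (hab u (hsq hu) w (hsq hw)))⟩

theorem IsIdeal.not_isStronglySolvable_top (hA : IsIdeal m A) {s t : L} {κ : F} (hκ : κ ≠ 0)
    (hst : (hA.leftMul (m s t)).HasEigenvalue κ) : ¬ IsStronglySolvable m ⊤ := by
  rintro ⟨k, hk⟩
  obtain ⟨v, hv⟩ := hst.exists_hasEigenvector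
  have hstv : m (m s t) (κ⁻¹ • v : A) = v := by
    rw [← coe_leftMul_apply hA, map_smul, hv.apply_eq_smul, inv_smul_smul₀ hκ]
  have hmem (j : ℕ) : (v : L) ∈ lcSeries m (mprod m ⊤ ⊤) j := by
    induction j with
    | zero => exact hstv ▸ apply_mem_map₂ m mem_top mem_top
    | succ j ih =>
      exact hstv ▸ apply_mem_map₂ m (apply_mem_map₂ m mem_top mem_top) (smul_mem _ _ ih)
  have hvk := hmem k
  rw [hk, mem_bot, ZeroMemClass.coe_eq_zero] at hvk
  exact hv.2 hvk

end StronglySolvable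

namespace IsCriticalAction

variable {F : Type*} [Field F] {L : Type*} [AddCommGroup L] [Module F L]
variable {m : L →ₗ[F] L →ₗ[F] L} {A B : Submodule F L} {hA : IsIdeal m A}

theorem mul_eq_neg_mul (hm : IsLeibniz m) (h : IsCriticalAction hA B) {x y : L} (hx : x ∈ B)
    (hy : y ∈ B) : m x y = -m y x :=
  h.faithful (h.isSubalg x hx y hy) (neg_mem (h.isSubalg y hy x hx)) <| by
    rw [map_neg, IsIdeal.leftMul_mul hm, IsIdeal.leftMul_mul hm, Ring.lie_def, Ring.lie_def,
      neg_sub]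

theorem mul_eq_zero_of_leftMul_eq_smul_one (hm : IsLeibniz m) (h : IsCriticalAction hA B) {b z : L}
    (hb : b ∈ B) (hz : z ∈ B) {c : F} (hzc : hA.leftMul z = c • 1) : m b z = 0 :=
  h.faithful (h.isSubalg b hb z hz) B.zero_mem <| by
    simp [IsIdeal.leftMul_mul hm, hzc, Ring.lie_def]

theorem eq_of_hasEigenvalue_mul (hm : IsLeibniz m) (h : IsCriticalAction hA B) {S : Submodule F L}
    (hSB : S ≤ B) (hS : IsSubalg m S) {s t : L} (hs : s ∈ S) (ht : t ∈ S) {κ : F} (hκ : κ ≠ 0)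
    (hst : (hA.leftMul (m s t)).HasEigenvalue κ) : S = B := by
  by_contra hne
  obtain ⟨v, hv⟩ := hst.exists_hasEigenvector
  exact hκ <| (h.isSupersolvable_sup S hSB hS hne).eq_zero_of_mul_mul_eq_smul hm (mem_sup_right hs)
    (mem_sup_right ht) (mem_sup_left v.2) (by simpa using hv.2)
    (congrArg Subtype.val hv.apply_eq_smul)

theorem finiteDimensional (h : IsCriticalAction hA B) : FiniteDimensional F A :=
  Module.finite_of_finrank_pos (one_pos.trans h.one_lt_finrank)

theorem nontrivial (h : IsCriticalAction hA B) : Nontrivial A :=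
  Module.nontrivial_of_finrank_pos (one_pos.trans h.one_lt_finrank)

theorem exists_hasEigenvalue_of_span_ne (hm : IsLeibniz m) (h : IsCriticalAction hA B) {b : L}
    (hb : b ∈ B) (hne : F ∙ b ≠ B) : ∃ μ, (hA.leftMul b).HasEigenvalue μ := by
  have hsub : IsSubalg m (F ∙ b) := isSubalg_span <| by simp [h.mul_self hm hb]
  have hsuper := h.isSupersolvable_sup _ ((span_singleton_le_iff_mem b B).2 hb) hsub hne
  have hI : IsIdealOf m (A ⊔ F ∙ b) A := ⟨le_sup_left, fun x _ ↦ hA x⟩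
  have := h.nontrivial
  obtain ⟨v, hvA, hv₀, hv⟩ := hsuper.exists_eigenvector hI ((nontrivial_iff_ne_bot).1 this)
  obtain ⟨μ, hμ⟩ := mem_span_singleton.1 (hv b (mem_sup_right (mem_span_singleton_self b))).1
  exact ⟨μ, hasEigenvalue_of_apply_eq_smul (v := ⟨v, hvA⟩) (by simpa using hv₀)
    (Subtype.ext (by simpa using hμ.symm))⟩

theorem exists_hasEigenvalue_of_mul_ne_zero (hm : IsLeibniz m) (h : IsCriticalAction hA B)
    {s t : L} (hs : s ∈ B) (ht : t ∈ B) (hst : m s t ≠ 0) {b : L} (hb : b ∈ B) :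
    ∃ μ, (hA.leftMul b).HasEigenvalue μ := by
  refine h.exists_hasEigenvalue_of_span_ne hm hb fun hspan ↦ hst ?_
  obtain ⟨c, rfl⟩ := mem_span_singleton.1 (hspan ▸ hs)
  obtain ⟨d, rfl⟩ := mem_span_singleton.1 (hspan ▸ ht)
  simp [h.mul_self hm hb]

theorem exists_not_scalar (h : IsCriticalAction hA B) :
    ∃ n ∈ B, (∀ c : F, hA.leftMul n ≠ c • 1) ∧
      ∀ b ∈ B, ∃ r ∈ B, ∃ t μ : F, hA.leftMul r = t • 1 ∧ m b n = r + μ • n := by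
  have := h.nontrivial
  obtain ⟨v, hv⟩ := exists_ne (0 : A)
  have hP : {b | b ∈ B ∧ ∀ c : F, hA.leftMul b ≠ c • 1}.Nonempty := by
    by_contra hempty
    refine h.one_lt_finrank.ne' (h.irreducible.finrank_eq_one hv ?_)
    rintro _ ⟨b, hb, rfl⟩
    by_contra! hbv
    exact hempty ⟨b, hb, fun c hc ↦ hbv c (by simp [hc])⟩
  obtain ⟨E, hE, hdisj, n, ⟨hn, hns⟩, hEn⟩ := h.isSupersolvable.exists_isIdealOf_disjoint
    (fun b hb ↦ hb.1) hP fun h₀ ↦ h₀.2 0 (by simp)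
  refine ⟨n, hn, hns, fun b hb ↦ ?_⟩
  obtain ⟨r, hr, w, hw, hrw⟩ := mem_sup.1 (hEn b hb).1
  obtain ⟨μ, rfl⟩ := mem_span_singleton.1 hw
  obtain ⟨t, ht⟩ : ∃ t : F, hA.leftMul r = t • 1 := by
    by_contra! hr'
    exact Set.disjoint_left.1 hdisj hr ⟨hE.1 hr, hr'⟩
  exact ⟨r, hE.1 hr, t, μ, ht, hrw.symm⟩

-- By Schur's lemma, `hA.leftMul n - l • 1` cannot be semi-invariant under `B`, as `hA.leftMul n`
-- has the eigenvalue `l` without being scalar.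
theorem eq_span_singleton_or_exists_mul (hm : IsLeibniz m) (h : IsCriticalAction hA B) :
    (∃ x, F ∙ x = B) ∨ ∃ x ∈ B, ∃ n ∈ B, ∃ r ∈ B, ∃ t μ κ : F, hA.leftMul r = t • 1 ∧
      m x n = r + μ • n ∧ κ ≠ 0 ∧ (hA.leftMul (m x n)).HasEigenvalue κ := by
  obtain ⟨n, hn, hns, hmul⟩ := h.exists_not_scalar
  refine or_iff_not_imp_left.2 fun hline ↦ ?_
  obtain ⟨l, hl⟩ := h.exists_hasEigenvalue_of_span_ne hm hn fun hspan ↦ hline ⟨n, hspan⟩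
  obtain ⟨v, hv⟩ := hl.exists_hasEigenvector
  by_contra! hno
  refine hns l (h.irreducible.eq_smul_one hl ?_)
  rintro _ ⟨x, hx, rfl⟩
  obtain ⟨r, hr, t, μ, ht, hxn⟩ := hmul x hx
  have hρ : hA.leftMul (m x n) = t • 1 + μ • hA.leftMul n := by simp [hxn, ht]
  have hev : (hA.leftMul (m x n)).HasEigenvalue (t + μ * l) :=
    hasEigenvalue_of_apply_eq_smul hv.2 (by simp [hρ, hv.apply_eq_smul, add_smul, mul_smul])
  have hκ : t + μ * l = 0 := by
    by_contra hκ
    exact hno x hx n hn r hr t μ _ ht hxn hκ hev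
  refine ⟨μ, ?_⟩
  rw [← IsIdeal.leftMul_mul hm, hρ, eq_neg_of_add_eq_zero_left hκ]
  module

theorem mul_mul_eq_zero_of_leftMul_mul_eq_one (hm : IsLeibniz m) (h : IsCriticalAction hA B)
    {b x y : L} (hb : b ∈ B) (hx : x ∈ B) (hy : y ∈ B) (hyx : hA.leftMul (m y x) = 1) :
    m b (m y x) = 0 :=
  h.mul_eq_zero_of_leftMul_eq_smul_one hm hb (h.isSubalg y hy x hx) (c := 1) (by rw [hyx, one_smul])

theorem hasEigenvalue_one_of_leftMul_eq_one (h : IsCriticalAction hA B) {z : L}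
    (hz : hA.leftMul z = 1) : (hA.leftMul z).HasEigenvalue 1 := by
  have := h.nontrivial
  obtain ⟨v, hv⟩ := exists_ne (0 : A)
  exact hasEigenvalue_of_apply_eq_smul hv (by simp [hz])

theorem mul_ne_zero_of_leftMul_mul_eq_one (h : IsCriticalAction hA B) {x y : L}
    (hyx : hA.leftMul (m y x) = 1) : m y x ≠ 0 := fun h₀ ↦ by
  have := h.nontrivial
  exact zero_ne_one (by rwa [h₀, map_zero] at hyx)

theorem exists_hasEigenvalue_of_leftMul_mul_eq_one (hm : IsLeibniz m) (h : IsCriticalAction hA B)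
    {x y : L} (hx : x ∈ B) (hy : y ∈ B) (hyx : hA.leftMul (m y x) = 1) :
    ∃ x' ∈ B, ∃ y' ∈ B, hA.leftMul (m y' x') = 1 ∧ (hA.leftMul x').HasEigenvalue 1 ∧
      (hA.leftMul y').HasEigenvalue 0 := by
  have hyx₀ := h.mul_ne_zero_of_leftMul_mul_eq_one hyx
  have hz : m y x ∈ B := h.isSubalg y hy x hx
  obtain ⟨c, hc⟩ := h.exists_hasEigenvalue_of_mul_ne_zero hm hy hx hyx₀ hx
  obtain ⟨d, hd⟩ := h.exists_hasEigenvalue_of_mul_ne_zero hm hy hx hyx₀ hy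
  obtain ⟨v, hv⟩ := hc.exists_hasEigenvector
  obtain ⟨w, hw⟩ := hd.exists_hasEigenvector
  refine ⟨x + (1 - c) • m y x, add_mem hx (B.smul_mem _ hz), y - d • m y x,
    sub_mem hy (B.smul_mem _ hz), ?_, hasEigenvalue_of_apply_eq_smul hv.2 ?_,
    hasEigenvalue_of_apply_eq_smul hw.2 ?_⟩
  · have hlie : ⁅hA.leftMul y, hA.leftMul x⁆ = 1 := by rw [← IsIdeal.leftMul_mul hm, hyx]
    rw [IsIdeal.leftMul_mul hm, ← hlie]
    simp only [map_sub, map_smul, hyx, map_add, Ring.lie_def, mul_add, sub_mul, smul_mul_assoc,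
      one_mul, mul_smul_comm, mul_one, mul_sub, add_mul, smul_add]
    module
  · simp [hyx, hv.apply_eq_smul, sub_smul]
  · simp [hyx, hw.apply_eq_smul]

theorem trichotomy (hm : IsLeibniz m) (h : IsCriticalAction hA B) :
    (∃ x, F ∙ x = B) ∨
      (∃ x ∈ B, ∃ y ∈ B, m y x = x ∧ (hA.leftMul x).HasEigenvalue 1) ∨
      ∃ x ∈ B, ∃ y ∈ B, hA.leftMul (m y x) = 1 ∧ (hA.leftMul x).HasEigenvalue 1 ∧
        (hA.leftMul y).HasEigenvalue 0 := by
  refine (h.eq_span_singleton_or_exists_mul hm).imp_right ?_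
  rintro ⟨x, hx, n, hn, r, hr, t, μ, κ, ht, hxn, hκ, hev⟩
  have hxr : m x r = 0 := h.mul_eq_zero_of_leftMul_eq_smul_one hm hx hr ht
  by_cases hμ : μ = 0
  · rw [hxn, hμ, zero_smul, add_zero, ht] at hev
    obtain ⟨v, hv⟩ := hev.exists_hasEigenvector
    have htκ : t = κ := smul_left_injective F hv.2 (by simpa using hv.apply_eq_smul)
    refine .inr (h.exists_hasEigenvalue_of_leftMul_mul_eq_one hm hn (B.smul_mem t⁻¹ hx) ?_)
    simp [hxn, hμ, ht, smul_smul, htκ, hκ]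
  · refine .inl ⟨κ⁻¹ • m x n, B.smul_mem _ (h.isSubalg x hx n hn), μ⁻¹ • x, B.smul_mem _ hx, ?_, ?_⟩
    · have hxxn : m x (m x n) = μ • m x n := by
        conv_lhs => rw [hxn, map_add, hxr, zero_add, map_smul]
      simp only [map_smul, LinearMap.smul_apply, hxxn, inv_smul_smul₀ hμ]
    · obtain ⟨v, hv⟩ := hev.exists_hasEigenvector
      exact hasEigenvalue_of_apply_eq_smul hv.2 (by simp [hv.apply_eq_smul, smul_smul, hκ])

theorem span_pair_eq (hm : IsLeibniz m) (h : IsCriticalAction hA B) {x y : L} (hx : x ∈ B)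
    (hy : y ∈ B) (hyx : m y x = x) (hev : (hA.leftMul x).HasEigenvalue 1) :
    span F {x, y} = B := by
  have hxy : m x y = -x := by rw [h.mul_eq_neg_mul hm hx hy, hyx]
  have hxS : x ∈ span F {x, y} := subset_span (by simp)
  refine h.eq_of_hasEigenvalue_mul hm (span_le.2 (by simp [Set.insert_subset_iff, hx, hy]))
    (isSubalg_span ?_) (s := y) (subset_span (by simp)) hxS one_ne_zero (by rwa [hyx])
  rintro _ (rfl | rfl) _ (rfl | rfl) <;>
    simp only [h.mul_self hm, hx, hy, hxy, hyx, zero_mem, neg_mem_iff, hxS]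

theorem span_triple_eq (hm : IsLeibniz m) (h : IsCriticalAction hA B) {x y : L} (hx : x ∈ B)
    (hy : y ∈ B) (hyx : hA.leftMul (m y x) = 1) : span F {x, y, m y x} = B := by
  have hz : m y x ∈ B := h.isSubalg y hy x hx
  have hcentral {b : L} (hb : b ∈ B) : m b (m y x) = 0 :=
    h.mul_mul_eq_zero_of_leftMul_mul_eq_one hm hb hx hy hyx
  have hcentral' {b : L} (hb : b ∈ B) : m (m y x) b = 0 := by
    rw [h.mul_eq_neg_mul hm hz hb, hcentral hb, neg_zero]
  have hxy : m x y = -m y x := h.mul_eq_neg_mul hm hx hy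
  have hzS : m y x ∈ span F {x, y, m y x} := subset_span (by simp)
  refine h.eq_of_hasEigenvalue_mul hm (span_le.2 (by simp [Set.insert_subset_iff, hx, hy, hz]))
    (isSubalg_span ?_) (s := y) (t := x) (subset_span (by simp)) (subset_span (by simp))
    one_ne_zero (h.hasEigenvalue_one_of_leftMul_eq_one hyx)
  rintro _ (rfl | rfl | rfl) _ (rfl | rfl | rfl) <;>
    simp [h.mul_self hm, hcentral, hcentral', hx, hy, hz, hxy, hzS]

theorem exists_charP_basis_of_mul_eq_self (hm : IsLeibniz m) (h : IsCriticalAction hA B) {x y : L}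
    (hx : x ∈ B) (hy : y ∈ B) (hyx : m y x = x) (hev : (hA.leftMul x).HasEigenvalue 1) :
    ∃ p : ℕ, p.Prime ∧ CharP F p ∧ ∃ e : ZMod p → L, (∀ i, e i ∈ A) ∧ LinearIndependent F e ∧
      span F (Set.range e) = A ∧ ∃ α : F, (∀ i, m x (e i) = e (i + 1)) ∧
      (∀ i, m y (e i) = (α + (i.val : F)) • e i) ∧ ∀ a : F, ∃ t, a = t ^ p - t := by
  have := h.finiteDimensional
  have hlie : ⁅hA.leftMul y, hA.leftMul x⁆ = hA.leftMul x := by rw [← IsIdeal.leftMul_mul hm, hyx]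
  have hyx₀ : m y x ≠ 0 := fun h₀ ↦ by
    obtain ⟨v, hv⟩ := hev.exists_hasEigenvector
    rw [hyx] at h₀
    exact hv.2 (by simpa [h₀] using hv.apply_eq_smul.symm)
  have heig {b : L} (hb : b ∈ B) := h.exists_hasEigenvalue_of_mul_ne_zero hm hy hx hyx₀ hb
  have hirr : ActsIrreducibly {hA.leftMul x, hA.leftMul y} := by
    refine h.irreducible.of_subset_adjoin ?_
    rintro _ ⟨b, hb, rfl⟩
    obtain ⟨c, d, rfl⟩ := mem_span_pair.1 (h.span_pair_eq hm hx hy hyx hev ▸ hb)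
    simp only [map_add, map_smul]
    exact add_mem (Subalgebra.smul_mem _ (Algebra.subset_adjoin (by simp)) c)
      (Subalgebra.smul_mem _ (Algebra.subset_adjoin (by simp)) d)
  obtain ⟨α, hα⟩ := heig hy
  obtain ⟨p, hp, hchar, e, hex, hey⟩ := exists_charP_basis_of_lie_eq_self hlie hirr hev hα
  have := Fact.mk hp
  refine ⟨p, hp, hchar, fun i ↦ e i, fun i ↦ (e i).2, linearIndependent_coe_basis e,
    span_range_coe_basis e, α, fun i ↦ congrArg Subtype.val (hex i),
    fun i ↦ congrArg Subtype.val (hey i), fun a ↦ ?_⟩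
  obtain ⟨τ, hτ⟩ := heig (add_mem hy (B.smul_mem a hx))
  rw [map_add, map_smul] at hτ
  exact exists_pow_char_sub_eq_of_hasEigenvalue e hex hey hτ

theorem exists_charP_basis_of_leftMul_mul_eq_one (hm : IsLeibniz m) (h : IsCriticalAction hA B)
    {x y : L} (hx : x ∈ B) (hy : y ∈ B) (hyx : hA.leftMul (m y x) = 1)
    (hx₁ : (hA.leftMul x).HasEigenvalue 1) (hy₀ : (hA.leftMul y).HasEigenvalue 0) :
    ∃ p : ℕ, p.Prime ∧ CharP F p ∧ ∃ e : ZMod p → L, (∀ i, e i ∈ A) ∧ LinearIndependent F e ∧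
      span F (Set.range e) = A ∧ (∀ i, m x (e i) = e (i + 1)) ∧
      (∀ i, m y (e i) = ((i.val + 1 : ℕ) : F) • e (i - 1)) ∧ (∀ i, m (m y x) (e i) = e i) ∧
      (p = 2 → ∀ a : F, ∃ b, b ^ p = a) := by
  have := h.finiteDimensional
  have hlie : ⁅hA.leftMul y, hA.leftMul x⁆ = 1 := by rw [← IsIdeal.leftMul_mul hm, hyx]
  have hirr : ActsIrreducibly {hA.leftMul x, hA.leftMul y} := by
    refine h.irreducible.of_subset_adjoin ?_
    rintro _ ⟨b, hb, rfl⟩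
    obtain ⟨c, d, e, rfl⟩ := mem_span_triple.1 (h.span_triple_eq hm hx hy hyx ▸ hb)
    simp only [map_add, map_smul, hyx]
    exact add_mem (add_mem (Subalgebra.smul_mem _ (Algebra.subset_adjoin (by simp)) c)
      (Subalgebra.smul_mem _ (Algebra.subset_adjoin (by simp)) d))
      (Subalgebra.smul_mem _ (one_mem _) e)
  obtain ⟨p, hp, hchar, e, hex, hey⟩ := exists_charP_basis_of_lie_eq_one hlie hirr hx₁ hy₀
  refine ⟨p, hp, hchar, fun i ↦ e i, fun i ↦ (e i).2, linearIndependent_coe_basis e,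
    span_range_coe_basis e, fun i ↦ congrArg Subtype.val (hex i),
    fun i ↦ congrArg Subtype.val (hey i),
    fun i ↦ congrArg Subtype.val (LinearMap.congr_fun hyx (e i)), ?_⟩
  rintro rfl a
  obtain ⟨τ, hτ⟩ := h.exists_hasEigenvalue_of_mul_ne_zero hm hy hx
    (h.mul_ne_zero_of_leftMul_mul_eq_one hyx) (add_mem hx (B.smul_mem (a - 1) hy))
  rw [map_add, map_smul] at hτ
  exact ⟨τ, by rw [sq_eq_one_add_of_hasEigenvalue e hex hey hτ, add_sub_cancel]⟩

end IsCriticalAction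

/-- Let `L` be a finite-dimensional solvable Leibniz algebra over `F`
with `φ(L) = 0` which is minimally non-supersolvable. Then either
(1) `L` is strongly solvable and `L = A ∔ ⟨x⟩` with `A` the unique minimal ideal and
`dim A > 1`; or (2) `L` is not strongly solvable, `F` has characteristic `p > 0`, `L`
has a unique minimal ideal `A` with basis `{e₁, …, e_p}` (indexed here by `ZMod p`), and
either (a) `L = A + ⟨x,y⟩` with antisymmetric multiplication on `⟨x,y⟩`,
`x·eᵢ = e_{i+1}`, `y·eᵢ = (α+i)·eᵢ` (indices mod `p`), `y·x = x`, and every `a ∈ F` is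
of the form `tᵖ − t`; or (b) `L = A + ⟨x,y,z⟩` with `x·eᵢ = e_{i+1}`,
`y·eᵢ = (i+1)·e_{i−1}`, `z·eᵢ = eᵢ` (indices mod `p`), `y·x = z`, `x·z = y·z = 0`, and
`F` perfect when `p = 2`. Moreover, either `L` is a Lie algebra, or in the above
structure `A = Leib(L)` and `A·L = 0`. -/
theorem minimally_non_supersolvable_structure
    {F : Type*} [Field F] {L : Type*} [AddCommGroup L] [Module F L]
    [FiniteDimensional F L]
    (m : L →ₗ[F] L →ₗ[F] L) (hm : IsLeibniz m)
    (hsolv : IsSolvableAlg m)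
    (hphi : frattiniIdeal m = ⊥)
    (hnotsuper : ¬ IsSupersolvable m (⊤ : Submodule F L))
    (hproper : ∀ S : Submodule F L, IsSubalg m S → S ≠ ⊤ → IsSupersolvable m S) :
    (IsStronglySolvable m (⊤ : Submodule F L) ∧
      ∃ (A : Submodule F L) (x : L),
        IsMinIdeal m A ∧ (∀ A', IsMinIdeal m A' → A' = A) ∧
        1 < Module.finrank F A ∧
        A ⊓ genBy m {x} = ⊥ ∧ A ⊔ genBy m {x} = ⊤ ∧
        (IsLie m ∨ (A = leibIdeal m ∧ ∀ a ∈ A, ∀ u : L, m a u = 0))) ∨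
    (¬ IsStronglySolvable m (⊤ : Submodule F L) ∧
      ∃ p : ℕ, p ≠ 0 ∧ CharP F p ∧
      ∃ A : Submodule F L,
        IsMinIdeal m A ∧ (∀ A', IsMinIdeal m A' → A' = A) ∧
        ∃ e : ZMod p → L,
          (∀ i, e i ∈ A) ∧ LinearIndependent F e ∧
          Submodule.span F (Set.range e) = A ∧
          (((∃ (x y : L) (α : F),
              A ⊔ genBy m {x, y} = ⊤ ∧
              (∀ u ∈ genBy m {x, y}, ∀ v ∈ genBy m {x, y}, m u v = - m v u) ∧
              (∀ i : ZMod p, m x (e i) = e (i + 1)) ∧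
              (∀ i : ZMod p, m y (e i) = (α + (i.val : F)) • e i) ∧
              m y x = x ∧
              (∀ a : F, ∃ t : F, a = t ^ p - t)) ∨
            (∃ x y z : L,
              A ⊔ genBy m {x, y, z} = ⊤ ∧
              (∀ i : ZMod p, m x (e i) = e (i + 1)) ∧
              (∀ i : ZMod p, m y (e i) = ((i.val + 1 : ℕ) : F) • e (i - 1)) ∧
              (∀ i : ZMod p, m z (e i) = e i) ∧
              m y x = z ∧ m x z = 0 ∧ m y z = 0 ∧
              (p = 2 → ∀ a : F, ∃ b : F, b ^ p = a))) ∧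
          (IsLie m ∨ (A = leibIdeal m ∧ ∀ a ∈ A, ∀ u : L, m a u = 0)))) := by
  have h : IsMinimallyNonSupersolvable m := ⟨hnotsuper, hproper⟩
  obtain ⟨A, hA⟩ := h.exists_isMinIdeal
  have huniq A' : IsMinIdeal m A' → A' = A := h.isMinIdeal_unique hm hsolv hphi hA
  have hLie := h.isLie_or_eq_leibIdeal hm hsolv hphi hA
  obtain ⟨B, hAB, hB⟩ := h.exists_isCriticalAction hm hsolv hphi hA
  rcases hB.trichotomy hm with ⟨x, hx⟩ | ⟨x, hx, y, hy, hyx, hx₁⟩ | ⟨x, hx, y, hy, hyx, hx₁, hy₀⟩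
  · have hsup : A ⊔ F ∙ x = ⊤ := hx ▸ hAB.sup_eq_top
    have hxx : m x x = 0 := hB.mul_self hm (hx ▸ mem_span_singleton_self x)
    rw [← hB.isSubalg.genBy_eq_of_span_eq hx] at hAB
    exact .inl ⟨hA.1.isStronglySolvable_top (hA.mul_eq_zero hm hsolv) hxx hsup, A, x, hA, huniq,
      hB.one_lt_finrank, hAB.inf_eq_bot, hAB.sup_eq_top, hLie⟩
  · obtain ⟨p, hp, hchar, e, heA, he, hspan, α, hex, hey, hF⟩ :=
      hB.exists_charP_basis_of_mul_eq_self hm hx hy hyx hx₁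
    have hgen := hB.isSubalg.genBy_eq_of_span_eq (hB.span_pair_eq hm hx hy hyx hx₁)
    exact .inr ⟨hA.1.not_isStronglySolvable_top one_ne_zero (s := y) (by rwa [hyx]), p, hp.ne_zero,
      hchar, A, hA, huniq, e, heA, he, hspan, .inl ⟨x, y, α, hgen ▸ hAB.sup_eq_top,
      hgen ▸ fun u hu v ↦ hB.mul_eq_neg_mul hm hu, hex, hey, hyx, hF⟩, hLie⟩
  · obtain ⟨p, hp, hchar, e, heA, he, hspan, hex, hey, hez, hF⟩ :=
      hB.exists_charP_basis_of_leftMul_mul_eq_one hm hx hy hyx hx₁ hy₀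
    have hgen := hB.isSubalg.genBy_eq_of_span_eq (hB.span_triple_eq hm hx hy hyx)
    have hcentral b (hb : b ∈ B) := hB.mul_mul_eq_zero_of_leftMul_mul_eq_one hm hb hx hy hyx
    exact .inr ⟨hA.1.not_isStronglySolvable_top one_ne_zero
      (hB.hasEigenvalue_one_of_leftMul_eq_one hyx), p, hp.ne_zero, hchar, A, hA, huniq, e, heA, he,
      hspan, .inr ⟨x, y, m y x, hgen ▸ hAB.sup_eq_top, hex, hey, hez, rfl, hcentral x hx,
        hcentral y hy, hF⟩, hLie⟩
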